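/- arXiv:1811.06598 — 11 statements merged into one kernel-verified Lean document; each statement's English description precedes it below -/
import Mathlib

section
/- Let a, b, c be rational multiples of π with 0 < a, b, c ≤ π/2. If cos a · cos b = cos c, then either (a = π/2 and c = π/2), or (b = π/2 and c = π/2), or (a = π/4, b = π/4 and c = π/3). -/
open Real

/-!
Put `ζ = -exp (2 a I)` and `ξ = -exp (2 b I)`. Since `1 + exp (2 a I) = 2 cos a exp (a I)`, the
number `(1 - ζ) (1 - ξ) / 2` is `2 cos a cos b` times a root of unity, so it is an algebraic integer
as soon as `2 cos a cos b` is. Yet a root of unity `ζ ≠ ±1` is congruent to `1` modulo a prime above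
`2` only if its order is `2 ^ k` with `k ≥ 2`, and then `(1 - ζ) ^ 2 ^ (k - 1)` is `2` up to a unit.
Hence each factor carries at most half of the valuation of `2`, with equality only at order `4`, and
divisibility of the product by `2` forces both orders to be `4`, that is `a = b = π / 4`.
-/

section PrimitiveRoot

open Polynomial

variable {R : Type*} [CommRing R] [IsDomain R] {ζ ξ : R} {m n : ℕ}

theorem one_sub_pow_totient_dvd_eval_one_cyclotomic [NeZero n] (hζ : IsPrimitiveRoot ζ n) :
    (1 - ζ) ^ n.totient ∣ (cyclotomic n R).eval 1 := by
  rw [cyclotomic_eq_prod_X_sub_primitiveRoots hζ, eval_prod, ← hζ.card_primitiveRoots,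
    ← Finset.prod_const]
  refine Finset.prod_dvd_prod_of_dvd _ _ fun μ hμ ↦ ?_
  obtain ⟨i, -, rfl⟩ :=
    hζ.eq_pow_of_pow_eq_one (isPrimitiveRoot_of_mem_primitiveRoots hμ).pow_eq_one
  simpa using sub_dvd_pow_sub_pow 1 ζ i

theorem exists_odd_eval_one_cyclotomic_eq (S : Type*) [CommRing S] (hn : ∀ k, n ≠ 2 ^ k) :
    ∃ r : ℕ, Odd r ∧ (cyclotomic n S).eval 1 = r := by
  by_cases! h : ∃ p : ℕ, p.Prime ∧ ∃ k, p ^ k = n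
  · obtain ⟨p, hp, k, rfl⟩ := h
    have := Fact.mk hp
    cases k with
    | zero => exact absurd rfl (hn 0)
    | succ k =>
      have hp2 : p ≠ 2 := by rintro rfl; exact hn _ rfl
      exact ⟨p, hp.odd_of_ne_two hp2, eval_one_cyclotomic_prime_pow k⟩
  · exact ⟨1, odd_one, by simpa using eval_one_cyclotomic_not_prime_pow fun {p} ↦ h p⟩

/-- For `n = 2 ^ k` the bound `2 * j ≤ n` says `j ≤ φ n`, except that it forces `j = 0` at `n = 1`,
where `1 - ζ = 0`. -/
theorem exists_odd_one_sub_pow_dvd_two_mul [NeZero n] (hζ : IsPrimitiveRoot ζ n) {j : ℕ}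
    (hj : ∀ k, n = 2 ^ k → 2 * j ≤ n) : ∃ r : ℕ, Odd r ∧ (1 - ζ) ^ j ∣ 2 * (r : R) := by
  have hdvd := one_sub_pow_totient_dvd_eval_one_cyclotomic hζ
  by_cases! hn : ∃ k, n = 2 ^ k
  · obtain ⟨k, rfl⟩ := hn
    have hjk := hj k rfl
    refine ⟨1, odd_one, ?_⟩
    cases k with
    | zero => simp [show j = 0 by lia]
    | succ k =>
      have hjφ : j ≤ (2 ^ (k + 1)).totient := by
        rw [Nat.totient_prime_pow_succ Nat.prime_two]
        lia
      rw [eval_one_cyclotomic_prime_pow] at hdvd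
      simpa using (pow_dvd_pow _ hjφ).trans hdvd
  · obtain ⟨r, hr, hr_eval⟩ := exists_odd_eval_one_cyclotomic_eq R hn
    have hφ : n.totient ≠ 0 := (Nat.totient_pos.mpr (NeZero.pos n)).ne'
    have hζr : 1 - ζ ∣ (r : R) := hr_eval ▸ (dvd_pow_self _ hφ).trans hdvd
    exact ⟨r ^ j, hr.pow, by push_cast; exact (pow_dvd_pow_of_dvd hζr j).mul_left 2⟩

theorem not_two_dvd_natCast_of_odd {S : Type*} [CommRing S] (h2 : ¬ IsUnit (2 : S)) {r : ℕ}
    (hr : Odd r) : ¬ (2 : S) ∣ r := by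
  obtain ⟨t, rfl⟩ := hr
  push_cast
  rw [dvd_add_right (dvd_mul_right 2 _)]
  exact fun h ↦ h2 (isUnit_of_dvd_one h)

theorem eq_four_of_two_dvd_one_sub_mul_one_sub [NeZero (2 : R)] (h2 : ¬ IsUnit (2 : R))
    (hζ : IsPrimitiveRoot ζ m) (hξ : IsPrimitiveRoot ξ n) (hm : 2 < m) (hn : 2 < n)
    (hdvd : 2 ∣ (1 - ζ) * (1 - ξ)) : m = 4 := by
  have : NeZero m := ⟨by lia⟩
  have : NeZero n := ⟨by lia⟩
  by_contra hm4
  obtain ⟨r, hr, hζr⟩ := exists_odd_one_sub_pow_dvd_two_mul hζ (j := 4) fun k hk ↦ by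
    have hk1 : 1 < k := (Nat.pow_lt_pow_iff_right one_lt_two).mp (by lia : 2 ^ 1 < 2 ^ k)
    have hk2 : k ≠ 2 := by rintro rfl; exact hm4 hk
    exact hk ▸ Nat.pow_le_pow_right two_pos (show 3 ≤ k by lia)
  obtain ⟨s, hs, hξs⟩ := exists_odd_one_sub_pow_dvd_two_mul hξ (j := 2) fun k hk ↦ by
    have hk1 : 1 < k := (Nat.pow_lt_pow_iff_right one_lt_two).mp (by lia : 2 ^ 1 < 2 ^ k)
    exact hk ▸ Nat.pow_le_pow_right two_pos hk1
  have hpow : (2 : R) ^ 3 * 2 ∣ 2 ^ 3 * ((r * s ^ 2 : ℕ) : R) := calc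
    (2 : R) ^ 3 * 2 = 2 ^ 4 := by ring
    _ ∣ ((1 - ζ) * (1 - ξ)) ^ 4 := pow_dvd_pow_of_dvd hdvd 4
    _ = (1 - ζ) ^ 4 * ((1 - ξ) ^ 2) ^ 2 := by ring
    _ ∣ 2 * r * (2 * s) ^ 2 := mul_dvd_mul hζr (pow_dvd_pow_of_dvd hξs 2)
    _ = 2 ^ 3 * ((r * s ^ 2 : ℕ) : R) := by push_cast; ring
  exact not_two_dvd_natCast_of_odd h2 (hr.mul hs.pow)
    ((mul_dvd_mul_iff_left (pow_ne_zero 3 two_ne_zero)).mp hpow)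

end PrimitiveRoot

theorem not_isUnit_two_integralClosure (K : Type*) [Field K] [CharZero K] :
    ¬ IsUnit (2 : integralClosure ℤ K) := fun h ↦ by
  have h2 : IsUnit (2 : ℤ) := isUnit_of_map_unit (algebraMap ℤ (integralClosure ℤ K)) 2 (by simpa)
  norm_num [Int.isUnit_iff] at h2

theorem eq_four_of_isIntegral_one_sub_mul_one_sub_div_two {K : Type*} [Field K] [CharZero K]
    {ζ ξ : K} {m n : ℕ} (hζ : IsPrimitiveRoot ζ m) (hξ : IsPrimitiveRoot ξ n)
    (hm : 2 < m) (hn : 2 < n) (hint : IsIntegral ℤ ((1 - ζ) * (1 - ξ) / 2)) : m = 4 := by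
  let ζ' : integralClosure ℤ K := ⟨ζ, hζ.isIntegral (by lia)⟩
  let ξ' : integralClosure ℤ K := ⟨ξ, hξ.isIntegral (by lia)⟩
  have hζ' : IsPrimitiveRoot ζ' m :=
    .of_map_of_injective (f := (integralClosure ℤ K).val) hζ Subtype.val_injective
  have hξ' : IsPrimitiveRoot ξ' n :=
    .of_map_of_injective (f := (integralClosure ℤ K).val) hξ Subtype.val_injective
  have hdvd : 2 ∣ (1 - ζ') * (1 - ξ') :=
    ⟨⟨_, hint⟩, Subtype.ext (mul_div_cancel₀ ((1 - ζ) * (1 - ξ)) two_ne_zero).symm⟩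
  exact eq_four_of_two_dvd_one_sub_mul_one_sub (not_isUnit_two_integralClosure K)
    hζ' hξ' hm hn hdvd

section Angle

open Complex (I)

theorem one_add_cexp_two_mul_mul_I (z : ℂ) :
    1 + Complex.exp (2 * z * I) = 2 * Complex.cos z * Complex.exp (z * I) := by
  rw [Complex.two_cos, add_mul, ← Complex.exp_add, ← Complex.exp_add]
  ring_nf
  simp [add_comm]

theorem neg_cexp_two_mul_mul_I_sq (a : ℝ) :
    (-Complex.exp (2 * a * I)) ^ 2 = Complex.exp ((4 * a : ℝ) * I) := by
  rw [neg_sq, ← Complex.exp_nat_mul]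
  push_cast
  ring_nf

theorem isOfFinOrder_neg_cexp_two_mul_mul_I {a : ℝ} (ha : ∃ q : ℚ, a = q * π) :
    IsOfFinOrder (-Complex.exp (2 * a * I)) := by
  obtain ⟨q, rfl⟩ := ha
  refine IsOfFinOrder.of_pow (n := 2) ?_ two_ne_zero
  rw [neg_cexp_two_mul_mul_I_sq, isOfFinOrder_iff_pow_eq_one]
  refine ⟨2 * (4 * q).den, by positivity, ?_⟩
  simpa [mul_assoc] using Complex.exp_rat_mul_pi_mul_I_pow_two_mul_den (4 * q)

theorem neg_cexp_two_mul_mul_I_sq_ne_one {a : ℝ} (h0 : 0 < a) (h2 : a < π / 2) :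
    (-Complex.exp (2 * a * I)) ^ 2 ≠ 1 := fun h ↦ by
  have hcos : cos (4 * a) = 1 := by
    rw [← Complex.exp_ofReal_mul_I_re, ← neg_cexp_two_mul_mul_I_sq, h, Complex.one_re]
  have := (cos_eq_one_iff_of_lt_of_lt (by linarith) (by linarith)).mp hcos
  linarith

theorem two_lt_orderOf_neg_cexp_two_mul_mul_I {a : ℝ} (ha : ∃ q : ℚ, a = q * π)
    (h0 : 0 < a) (h2 : a < π / 2) : 2 < orderOf (-Complex.exp (2 * a * I)) := by
  have hpos := (isOfFinOrder_neg_cexp_two_mul_mul_I ha).orderOf_pos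
  have hndvd : ¬ orderOf (-Complex.exp (2 * a * I)) ∣ 2 := fun h ↦
    neg_cexp_two_mul_mul_I_sq_ne_one h0 h2 (orderOf_dvd_iff_pow_eq_one.mp h)
  by_contra! hle
  interval_cases orderOf (-Complex.exp (2 * a * I)) <;> simp at hndvd

theorem eq_pi_div_four_of_orderOf_eq_four {a : ℝ} (h0 : 0 < a) (h2 : a < π / 2)
    (h : orderOf (-Complex.exp (2 * a * I)) = 4) : a = π / 4 := by
  have hsq : (-Complex.exp (2 * a * I)) ^ 2 = -1 := by
    refine (sq_eq_one_iff.mp ?_).resolve_left (neg_cexp_two_mul_mul_I_sq_ne_one h0 h2)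
    rw [← pow_mul]
    exact orderOf_dvd_iff_pow_eq_one.mp h.dvd
  have hcos : cos (4 * a - π) = 1 := by
    rw [cos_sub_pi, ← Complex.exp_ofReal_mul_I_re, ← neg_cexp_two_mul_mul_I_sq, hsq]
    simp
  have := (cos_eq_one_iff_of_lt_of_lt (by linarith) (by linarith)).mp hcos
  linarith

theorem eq_pi_div_four_of_isIntegral_two_mul_cos_mul_cos {a b : ℝ}
    (ha : ∃ q : ℚ, a = q * π) (hb : ∃ q : ℚ, b = q * π)
    (ha0 : 0 < a) (hb0 : 0 < b) (ha2 : a < π / 2) (hb2 : b < π / 2)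
    (hint : IsIntegral ℤ (2 * (cos a * cos b))) : a = π / 4 := by
  have hexp {x : ℝ} (hx : ∃ q : ℚ, x = q * π) : IsIntegral ℤ (Complex.exp (x * I)) := by
    obtain ⟨q, rfl⟩ := hx
    simpa using Complex.isIntegral_exp_rat_mul_pi_mul_I q
  have hfactor : (1 - -Complex.exp (2 * a * I)) * (1 - -Complex.exp (2 * b * I)) / 2 =
      (2 * (cos a * cos b) : ℝ) * (Complex.exp (a * I) * Complex.exp (b * I)) := by
    simp only [sub_neg_eq_add, one_add_cexp_two_mul_mul_I]
    push_cast
    ring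
  refine eq_pi_div_four_of_orderOf_eq_four ha0 ha2 <|
    eq_four_of_isIntegral_one_sub_mul_one_sub_div_two (.orderOf _)
      (.orderOf (-Complex.exp (2 * b * I))) (two_lt_orderOf_neg_cexp_two_mul_mul_I ha ha0 ha2)
      (two_lt_orderOf_neg_cexp_two_mul_mul_I hb hb0 hb2) ?_
  rw [hfactor]
  exact (hint.algebraMap (B := ℂ)).mul ((hexp ha).mul (hexp hb))

end Angle

theorem smith_spherical_pythagorean_triples_general
    (a b c : ℝ)
    (ha : ∃ q : ℚ, a = q * π) (hb : ∃ q : ℚ, b = q * π) (hc : IsIntegral ℤ (2 * cos c))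
    (ha0 : 0 < a) (hb0 : 0 < b) (hc0 : 0 ≤ c)
    (ha2 : a ≤ π / 2) (hb2 : b ≤ π / 2) (hc2 : c ≤ π)
    (heq : cos a * cos b = cos c) :
    (a = π / 2 ∧ c = π / 2) ∨ (b = π / 2 ∧ c = π / 2) ∨
      (a = π / 4 ∧ b = π / 4 ∧ c = π / 3) := by
  have hc_eq : c = arccos (cos a * cos b) := by rw [heq, arccos_cos hc0 hc2]
  rcases ha2.eq_or_lt with rfl | ha2
  · exact .inl ⟨rfl, by simpa using hc_eq⟩
  rcases hb2.eq_or_lt with rfl | hb2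
  · exact .inr (.inl ⟨rfl, by simpa using hc_eq⟩)
  rw [← heq] at hc
  have ha4 : a = π / 4 :=
    eq_pi_div_four_of_isIntegral_two_mul_cos_mul_cos ha hb ha0 hb0 ha2 hb2 hc
  have hb4 : b = π / 4 :=
    eq_pi_div_four_of_isIntegral_two_mul_cos_mul_cos hb ha hb0 ha0 hb2 ha2
      (by rwa [mul_comm (cos b)])
  have hcos : cos (π / 4) * cos (π / 4) = cos (π / 3) := by
    rw [cos_pi_div_four, cos_pi_div_three, div_mul_div_comm, mul_self_sqrt zero_le_two]
    norm_num
  refine .inr (.inr ⟨ha4, hb4, ?_⟩)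
  rw [hc_eq, ha4, hb4, hcos, arccos_cos (by positivity) (by linarith [pi_pos])]

theorem smith_spherical_pythagorean_triples
    (a b c : ℝ)
    (ha : ∃ q : ℚ, a = q * π) (hb : ∃ q : ℚ, b = q * π) (hc : ∃ q : ℚ, c = q * π)
    (ha0 : 0 < a) (hb0 : 0 < b) (hc0 : 0 < c)
    (ha2 : a ≤ π / 2) (hb2 : b ≤ π / 2) (hc2 : c ≤ π / 2)
    (heq : Real.cos a * Real.cos b = Real.cos c) :
    (a = π / 2 ∧ c = π / 2) ∨ (b = π / 2 ∧ c = π / 2) ∨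
      (a = π / 4 ∧ b = π / 4 ∧ c = π / 3) := by
  obtain ⟨q, rfl⟩ := hc
  exact smith_spherical_pythagorean_triples_general a b (q * π) ha hb
    (isIntegral_two_mul_cos_rat_mul_pi q) ha0 hb0 hc0.le ha2 hb2 (by linarith) heq
end

section
/- cos(π/7) − cos(2π/7) + cos(3π/7) = 1/2. -/
open Real

/-! Since `-cos (2π/7) = cos (5π/7)`, the alternating sum is the sum of the cosines of the odd
multiples `θ, 3θ, 5θ` of `θ = π/7`. Multiplied by `2 sin θ` it telescopes to `sin 6θ`, which equals
`sin θ` because `7θ = π`. -/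

theorem two_mul_sin_mul_sum_cos_odd_mul (n : ℕ) (θ : ℝ) :
    2 * sin θ * ∑ i ∈ Finset.range n, cos ((2 * i + 1) * θ) = sin (2 * n * θ) := by
  have sum_eq : sin θ * ∑ i ∈ Finset.range n, cos ((2 * i + 1) * θ) =
      sin (n * θ) * cos (n * θ) := by
    convert sin_mul_sum_cos n (2 * θ) θ using 3 <;> ring_nf
  calc 2 * sin θ * ∑ i ∈ Finset.range n, cos ((2 * i + 1) * θ)
      = 2 * sin (n * θ) * cos (n * θ) := by linear_combination 2 * sum_eq
    _ = sin (2 * n * θ) := by rw [← sin_two_mul, mul_assoc]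

theorem sum_cos_odd_mul_pi_div_two_mul_add_one {n : ℕ} (hn : n ≠ 0) :
    ∑ i ∈ Finset.range n, cos ((2 * i + 1) * (π / (2 * n + 1))) = 1 / 2 := by
  set θ : ℝ := π / (2 * n + 1) with hθ
  have sin_ne_zero : sin θ ≠ 0 := by
    refine (sin_pos_of_pos_of_lt_pi (by positivity) (div_lt_self pi_pos ?_)).ne'
    have : (0 : ℝ) < n := by positivity
    linarith
  have sin_eq : sin (2 * n * θ) = sin θ := by
    rw [← sin_pi_sub]
    congr 1
    rw [hθ]
    field_simp
    ring
  apply mul_left_cancel₀ (mul_ne_zero two_ne_zero sin_ne_zero)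
  rw [two_mul_sin_mul_sum_cos_odd_mul, sin_eq]
  ring

theorem conway_jones_item4 :
    Real.cos (π / 7) - Real.cos (2 * π / 7) + Real.cos (3 * π / 7) = 1 / 2 := by
  have cos_five : cos (5 * π / 7) = -cos (2 * π / 7) := by
    rw [← cos_pi_sub]
    congr 1
    ring
  have sum_eq : cos (π / 7) + cos (3 * π / 7) + cos (5 * π / 7) = 1 / 2 := by
    convert sum_cos_odd_mul_pi_div_two_mul_add_one three_ne_zero using 1
    norm_num [Finset.sum_range_succ, mul_div_assoc]
  linear_combination sum_eq - cos_five
end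

section
/- cos(π/5) − cos(π/15) + cos(4π/15) = 1/2. -/
open Real

theorem cos_pi_div_three_sub_add_cos_pi_div_three_add (x : ℝ) :
    cos (π / 3 - x) + cos (π / 3 + x) = cos x := by
  rw [← two_mul_cos_mul_cos, cos_pi_div_three]
  ring

theorem cos_pi_div_five_sub_cos_two_mul_pi_div_five :
    cos (π / 5) - cos (2 * π / 5) = 1 / 2 := by
  rw [mul_div_assoc, cos_two_mul]
  linarith [quadratic_root_cos_pi_div_five]

theorem conway_jones_item5 :
    Real.cos (π / 5) - Real.cos (π / 15) + Real.cos (4 * π / 15) = 1 / 2 := by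
  have cos_pi_div_fifteen : cos (π / 15) = cos (4 * π / 15) + cos (2 * π / 5) := by
    rw [← cos_pi_div_three_sub_add_cos_pi_div_three_add (π / 15)]
    ring_nf
  calc cos (π / 5) - cos (π / 15) + cos (4 * π / 15)
      = cos (π / 5) - cos (2 * π / 5) := by rw [cos_pi_div_fifteen]; ring
    _ = 1 / 2 := cos_pi_div_five_sub_cos_two_mul_pi_div_five
end

section
/- −cos(2π/5) + cos(2π/15) − cos(7π/15) = 1/2. -/
open Real

theorem conway_jones_item6 :
    -Real.cos (2 * π / 5) + Real.cos (2 * π / 15) - Real.cos (7 * π / 15) = 1 / 2 := by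
  have angle_sub : 2 * π / 15 = π / 3 - π / 5 := by ring
  have angle_supplement : 7 * π / 15 = π - (π / 3 + π / 5) := by ring
  calc
    -cos (2 * π / 5) + cos (2 * π / 15) - cos (7 * π / 15)
    _ = cos (π / 3 - π / 5) + cos (π / 3 + π / 5) - cos (2 * π / 5) := by
      rw [angle_sub, angle_supplement, cos_pi_sub]
      ring
    _ = cos (π / 5) - cos (2 * π / 5) := by
      rw [cos_pi_div_three_sub_add_cos_pi_div_three_add]
    _ = 1 / 2 := cos_pi_div_five_sub_cos_two_mul_pi_div_five
end

section
/- −cos(2π/7) + cos(3π/7) + cos(4π/21) + cos(10π/21) = 1/2. -/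
open Real

theorem sum_range_cos_odd_mul_pi_div {n : ℕ} (hn : n ≠ 0) :
    ∑ k ∈ Finset.range n, cos ((2 * k + 1) * π / (2 * n + 1)) = 1 / 2 := by
  set θ : ℝ := π / (2 * n + 1) with hθ
  have hθ_mul : (2 * n + 1) * θ = π := by rw [hθ]; field_simp
  have hsin : sin θ ≠ 0 := by
    have hn_pos : (0 : ℝ) < n := mod_cast Nat.pos_of_ne_zero hn
    have hθ_lt : θ < π := div_lt_self pi_pos (by linarith)
    exact (sin_pos_of_pos_of_lt_pi (by positivity) hθ_lt).ne'
  have hterm (k : ℕ) : (2 * k + 1) * π / (2 * n + 1) = 2 * θ * k + θ := by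
    rw [hθ]; ring
  apply mul_left_cancel₀ hsin
  calc
    sin θ * ∑ k ∈ Finset.range n, cos ((2 * k + 1) * π / (2 * n + 1))
    _ = sin (2 * θ / 2) * ∑ k ∈ Finset.range n, cos (2 * θ * k + θ) := by
      simp only [hterm, mul_div_cancel_left₀ θ (two_ne_zero' ℝ)]
    _ = sin (n * (2 * θ) / 2) * cos ((n - 1) * (2 * θ) / 2 + θ) := sin_mul_sum_cos ..
    _ = sin (n * θ) * cos (n * θ) := by ring_nf
    _ = sin (2 * (n * θ)) / 2 := by rw [sin_two_mul]; ring
    _ = sin (π - θ) / 2 := by rw [← hθ_mul]; ring_nf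
    _ = sin θ * (1 / 2) := by rw [sin_pi_sub]; ring

theorem conway_jones_item9 :
    -Real.cos (2 * π / 7) + Real.cos (3 * π / 7) + Real.cos (4 * π / 21)
      + Real.cos (10 * π / 21) = 1 / 2 := by
  have hthird : cos (4 * π / 21) + cos (10 * π / 21) = cos (π / 7) := by
    rw [← cos_pi_div_three_sub_add_cos_pi_div_three_add (π / 7)]
    ring_nf
  have hsupp : cos (5 * π / 7) = -cos (2 * π / 7) := by
    rw [← cos_pi_sub]
    ring_nf
  have hseventh : cos (π / 7) + cos (3 * π / 7) + cos (5 * π / 7) = 1 / 2 := by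
    rw [← sum_range_cos_odd_mul_pi_div three_ne_zero]
    norm_num [Finset.sum_range_succ]
  linarith
end

section
/- −cos(π/15) + cos(2π/15) + cos(4π/15) − cos(7π/15) = 1/2. -/
open Real

/-!
The relation comes from the shorter one `cos (π / 5) - cos (2 * π / 5) = 1 / 2`: the vanishing of
the sum of the cube roots of unity gives `cos (π / 3 + x) + cos (π / 3 - x) = cos x`, which
rewrites `cos (π / 5)` through `x = 2 * π / 15` and `cos (2 * π / 5)` through `x = π / 15`.
-/

theorem cos_pi_div_three_add_add_cos_pi_div_three_sub (x : ℝ) :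
    cos (π / 3 + x) + cos (π / 3 - x) = cos x := by
  rw [cos_add, cos_sub, cos_pi_div_three]
  ring

theorem conway_jones_item10 :
    -Real.cos (π / 15) + Real.cos (2 * π / 15) + Real.cos (4 * π / 15)
      - Real.cos (7 * π / 15) = 1 / 2 := by
  have split_cos_two_mul_pi_div_fifteen :
      cos (7 * π / 15) + cos (π / 5) = cos (2 * π / 15) := by
    convert cos_pi_div_three_add_add_cos_pi_div_three_sub (2 * π / 15) using 3 <;> ring
  have split_cos_pi_div_fifteen : cos (2 * π / 5) + cos (4 * π / 15) = cos (π / 15) := by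
    convert cos_pi_div_three_add_add_cos_pi_div_three_sub (π / 15) using 3 <;> ring
  calc
    -cos (π / 15) + cos (2 * π / 15) + cos (4 * π / 15) - cos (7 * π / 15)
      = cos (π / 5) - cos (2 * π / 5) := by
        rw [← split_cos_pi_div_fifteen, ← split_cos_two_mul_pi_div_fifteen]
        ring
    _ = 1 / 2 := cos_pi_div_five_sub_cos_two_mul_pi_div_five
end

section
/- For every real number t with 0 < t < π/6, the 4×4 real symmetric matrix G with rows (1, −cos r, −cos p, −cos q), (−cos r, 1, −cos q, −cos p), (−cos p, −cos q, 1, −cos s), (−cos q, −cos p, −cos s, 1), where p = π/4 + t/2, q = π/4 − t/2, r = 2π/3 + t, s = 2π/3 − t, is positive definite. -/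
open Real

/-! The matrix is invariant under the exchange of the coordinates `1 ↔ 2`, `3 ↔ 4`, hence splits
into two `2 × 2` forms, on the symmetric and on the antisymmetric vectors. In this family the two
determinants coincide: product formulas for cosines give
`(1 ± cos r)(1 ± cos s) - (cos p ∓ cos q)² = cos² t - 3/4 = (cos 2t - 1/2) / 2`. -/

section PosDef

open Matrix

lemma two_mul_star_dotProduct_fromBlocks_mulVec {n R : Type*} [Fintype n] [Ring R] [StarRing R]
    (A B : Matrix n n R) (x y : n → R) :
    2 * (star (Sum.elim x y) ⬝ᵥ (fromBlocks A B B A *ᵥ Sum.elim x y)) =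
      star (x + y) ⬝ᵥ ((A + B) *ᵥ (x + y)) + star (x - y) ⬝ᵥ ((A - B) *ᵥ (x - y)) := by
  simp only [Function.star_sumElim, fromBlocks_mulVec, Sum.elim_comp_inl, Sum.elim_comp_inr,
    sumElim_dotProduct_sumElim, star_add, star_sub, add_mulVec, sub_mulVec, mulVec_add,
    mulVec_sub, dotProduct_add, dotProduct_sub, add_dotProduct, sub_dotProduct]
  noncomm_ring

variable {R : Type*} [CommRing R] [LinearOrder R] [IsStrictOrderedRing R] [StarRing R]

lemma isHermitian_fromBlocks_iff_add_sub {n : Type*} {A B : Matrix n n R} :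
    (fromBlocks A B B A).IsHermitian ↔ (A + B).IsHermitian ∧ (A - B).IsHermitian := by
  rw [isHermitian_fromBlocks_iff]
  refine ⟨fun ⟨hA, hB, _, _⟩ ↦ ⟨hA.add hB, hA.sub hB⟩, fun ⟨hadd, hsub⟩ ↦ ?_⟩
  have hA : A.IsHermitian := .ext fun i j ↦ by
    have hadd_ij := hadd.apply i j
    have hsub_ij := hsub.apply i j
    simp only [Matrix.add_apply, Matrix.sub_apply, star_add, star_sub] at hadd_ij hsub_ij
    linarith
  have hB : B.IsHermitian := by simpa using hadd.sub hA
  exact ⟨hA, hB, hB, hA⟩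

lemma posDef_fromBlocks_iff_add_sub {n : Type*} [Finite n] {A B : Matrix n n R} :
    (fromBlocks A B B A).PosDef ↔ (A + B).PosDef ∧ (A - B).PosDef := by
  have := Fintype.ofFinite n
  constructor
  · intro h
    obtain ⟨hadd, hsub⟩ := isHermitian_fromBlocks_iff_add_sub.1 h.isHermitian
    have form_pos {x : n → R} (hx : x ≠ 0) (y : n → R) :
        0 < star (x + y) ⬝ᵥ ((A + B) *ᵥ (x + y)) + star (x - y) ⬝ᵥ ((A - B) *ᵥ (x - y)) := by
      rw [← two_mul_star_dotProduct_fromBlocks_mulVec]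
      refine mul_pos two_pos (h.dotProduct_mulVec_pos fun hxy ↦ hx ?_)
      simpa using congrArg (· ∘ Sum.inl) hxy
    have pos_of_double {M : Matrix n n R} {u : n → R}
        (hM : 0 < star (u + u) ⬝ᵥ (M *ᵥ (u + u))) : 0 < star u ⬝ᵥ (M *ᵥ u) := by
      simp only [star_add, mulVec_add, dotProduct_add, add_dotProduct] at hM
      linarith
    exact ⟨.of_dotProduct_mulVec_pos hadd fun u hu ↦
        pos_of_double (by simpa using form_pos hu u),
      .of_dotProduct_mulVec_pos hsub fun u hu ↦
        pos_of_double (by simpa using form_pos hu (-u))⟩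
  · rintro ⟨hadd, hsub⟩
    refine .of_dotProduct_mulVec_pos
      (isHermitian_fromBlocks_iff_add_sub.2 ⟨hadd.isHermitian, hsub.isHermitian⟩) fun z hz ↦ ?_
    obtain ⟨x, y, rfl⟩ : ∃ x y : n → R, z = Sum.elim x y :=
      ⟨_, _, (Sum.elim_comp_inl_inr z).symm⟩
    refine pos_of_mul_pos_right ?_ (zero_le_two (α := R))
    rw [two_mul_star_dotProduct_fromBlocks_mulVec]
    by_cases hxy : x + y = 0
    · have hsub_ne : x - y ≠ 0 := fun h ↦ hz <| by
        obtain rfl : x = y := sub_eq_zero.1 h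
        obtain rfl : x = 0 := self_eq_neg.1 (eq_neg_of_add_eq_zero_left hxy)
        simp
      exact add_pos_of_nonneg_of_pos (hadd.posSemidef.dotProduct_mulVec_nonneg _)
        (hsub.dotProduct_mulVec_pos hsub_ne)
    · exact add_pos_of_pos_of_nonneg (hadd.dotProduct_mulVec_pos hxy)
        (hsub.posSemidef.dotProduct_mulVec_nonneg _)

variable [TrivialStar R]

lemma posDef_fin_two_iff {a b d : R} :
    !![a, b; b, d].PosDef ↔ 0 < a ∧ b ^ 2 < a * d := by
  have form_eq (x : Fin 2 → R) : star x ⬝ᵥ (!![a, b; b, d] *ᵥ x) =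
      a * x 0 ^ 2 + 2 * b * x 0 * x 1 + d * x 1 ^ 2 := by
    simp only [star_trivial, dotProduct, mulVec, Fin.sum_univ_two, of_apply, cons_val_zero,
      cons_val_one]
    ring
  have complete_square (u v : R) : a * (a * u ^ 2 + 2 * b * u * v + d * v ^ 2) =
      (a * u + b * v) ^ 2 + (a * d - b ^ 2) * v ^ 2 := by
    ring
  constructor
  · intro h
    have ha : 0 < a := h.diag_pos (i := 0)
    have hba : 0 < star ![-b, a] ⬝ᵥ (!![a, b; b, d] *ᵥ ![-b, a]) :=
      h.dotProduct_mulVec_pos fun h0 ↦ ha.ne' (congrFun h0 1)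
    rw [form_eq] at hba
    have hdet : 0 < a * (a * d - b ^ 2) := by
      convert hba using 1
      simp only [cons_val_zero, cons_val_one]
      ring
    exact ⟨ha, sub_pos.1 (pos_of_mul_pos_right hdet ha.le)⟩
  · rintro ⟨ha, hdet⟩
    refine .of_dotProduct_mulVec_pos (.ext fun i j ↦ ?_) fun x hx ↦ ?_
    · fin_cases i <;> fin_cases j <;> simp
    · rw [form_eq]
      refine pos_of_mul_pos_right ?_ ha.le
      rw [complete_square]
      by_cases hx1 : x 1 = 0
      · have hx0 : x 0 ≠ 0 := fun hx0 ↦ hx (funext (Fin.forall_fin_two.2 ⟨hx0, hx1⟩))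
        simpa [hx1] using sq_pos_of_ne_zero (mul_ne_zero ha.ne' hx0)
      · exact add_pos_of_nonneg_of_pos (sq_nonneg _)
          (mul_pos (sub_pos.2 hdet) (sq_pos_of_ne_zero hx1))

/-- The pairing of the coordinates `0, 1` and `2, 3` that are exchanged by the involution: `inl`
lists one coordinate of each pair, `inr` its image. -/
def finFourEquivSum : Fin 4 ≃ Fin 2 ⊕ Fin 2 where
  toFun := ![.inl 0, .inr 0, .inl 1, .inr 1]
  invFun := Sum.elim ![0, 2] ![1, 3]
  left_inv := by decide
  right_inv := by decide

lemma posDef_fin_four_swap_invariant_iff {a b c d e f : R} :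
    !![a, b, c, d; b, a, d, c; c, d, e, f; d, c, f, e].PosDef ↔
      (0 < a + b ∧ (c + d) ^ 2 < (a + b) * (e + f)) ∧
        (0 < a - b ∧ (c - d) ^ 2 < (a - b) * (e - f)) := by
  have block_form : !![a, b, c, d; b, a, d, c; c, d, e, f; d, c, f, e] =
      (fromBlocks !![a, c; c, e] !![b, d; d, f] !![b, d; d, f] !![a, c; c, e]).submatrix
        finFourEquivSum finFourEquivSum := by
    ext i j
    fin_cases i <;> fin_cases j <;> rfl
  have add_block : !![a, c; c, e] + !![b, d; d, f] = !![a + b, c + d; c + d, e + f] := by simp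
  have sub_block : !![a, c; c, e] - !![b, d; d, f] = !![a - b, c - d; c - d, e - f] := by
    ext i j
    fin_cases i <;> fin_cases j <;> rfl
  have reindex (M : Matrix (Fin 2 ⊕ Fin 2) (Fin 2 ⊕ Fin 2) R) :
      (M.submatrix finFourEquivSum finFourEquivSum).PosDef ↔ M.PosDef :=
    ⟨fun h ↦ by simpa using h.submatrix finFourEquivSum.symm.injective,
      fun h ↦ h.submatrix finFourEquivSum.injective⟩
  rw [block_form, reindex, posDef_fromBlocks_iff_add_sub, add_block, sub_block, posDef_fin_two_iff,
    posDef_fin_two_iff]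

end PosDef

/-- The Gram matrix `G(p, q, r, s)` attached to the dihedral angles of a `ℤ₂`-symmetric spherical
tetrahedron: `r` and `s` occur once each, `p` and `q` at two edges each. -/
noncomputable def symmTetrahedronGram (p q r s : ℝ) : Matrix (Fin 4) (Fin 4) ℝ :=
  !![1, -cos r, -cos p, -cos q;
     -cos r, 1, -cos q, -cos p;
     -cos p, -cos q, 1, -cos s;
     -cos q, -cos p, -cos s, 1]

lemma posDef_symmTetrahedronGram_iff (p q r s : ℝ) :
    (symmTetrahedronGram p q r s).PosDef ↔
      (cos p + cos q) ^ 2 < (1 - cos r) * (1 - cos s) ∧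
        (cos p - cos q) ^ 2 < (1 + cos r) * (1 + cos s) := by
  have pos_left {x y z : ℝ} (hz : 0 ≤ z) (h : x ^ 2 < y * z) : 0 < y :=
    pos_of_mul_pos_left ((sq_nonneg x).trans_lt h) hz
  have sq_add : (-cos p + -cos q) ^ 2 = (cos p + cos q) ^ 2 := by ring
  have sq_sub : (-cos p - -cos q) ^ 2 = (cos p - cos q) ^ 2 := by ring
  rw [symmTetrahedronGram, posDef_fin_four_swap_invariant_iff, sq_add, sq_sub]
  simp only [← sub_eq_add_neg, sub_neg_eq_add]
  exact and_congr
    (and_iff_right_of_imp (pos_left (sub_nonneg.2 (cos_le_one s))))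
    (and_iff_right_of_imp (pos_left (by linarith [neg_one_le_cos s])))

lemma cos_add_mul_cos_sub (x y : ℝ) :
    cos (x + y) * cos (x - y) = cos x ^ 2 + cos y ^ 2 - 1 := by
  rw [cos_add, cos_sub]
  linear_combination
    -sin y ^ 2 * sin_sq_add_cos_sq x - (1 - cos x ^ 2) * sin_sq_add_cos_sq y

lemma one_sub_cos_add_mul_one_sub_cos_sub (x y : ℝ) :
    (1 - cos (x + y)) * (1 - cos (x - y)) = (cos x - cos y) ^ 2 := by
  linear_combination cos_add_mul_cos_sub x y + two_mul_cos_mul_cos x y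

lemma one_add_cos_add_mul_one_add_cos_sub (x y : ℝ) :
    (1 + cos (x + y)) * (1 + cos (x - y)) = (cos x + cos y) ^ 2 := by
  linear_combination cos_add_mul_cos_sub x y - two_mul_cos_mul_cos x y

lemma cos_pi_div_four_add_add_cos_pi_div_four_sub_sq (x : ℝ) :
    (cos (π / 4 + x) + cos (π / 4 - x)) ^ 2 = 1 + cos (2 * x) := by
  have sum_eq : cos (π / 4 + x) + cos (π / 4 - x) = √2 * cos x := by
    rw [cos_add, cos_sub, cos_pi_div_four]
    ring
  rw [sum_eq, mul_pow, sq_sqrt zero_le_two, cos_sq]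
  ring

lemma cos_pi_div_four_add_sub_cos_pi_div_four_sub_sq (x : ℝ) :
    (cos (π / 4 + x) - cos (π / 4 - x)) ^ 2 = 1 - cos (2 * x) := by
  have sub_eq : cos (π / 4 + x) - cos (π / 4 - x) = -(√2 * sin x) := by
    rw [cos_add, cos_sub, sin_pi_div_four]
    ring
  rw [sub_eq, neg_sq, mul_pow, sq_sqrt zero_le_two, sin_sq, cos_sq]
  ring

lemma cos_two_pi_div_three : cos (2 * π / 3) = -(1 / 2) := by
  rw [← cos_pi_div_three, ← cos_pi_sub]
  congr 1
  ring

theorem gram_matrix_family_11_posDef_general (t : ℝ) :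
    (symmTetrahedronGram (π / 4 + t / 2) (π / 4 - t / 2) (2 * π / 3 + t) (2 * π / 3 - t)).PosDef ↔
      1 / 2 < cos (2 * t) := by
  rw [posDef_symmTetrahedronGram_iff, cos_pi_div_four_add_add_cos_pi_div_four_sub_sq,
    cos_pi_div_four_add_sub_cos_pi_div_four_sub_sq, one_sub_cos_add_mul_one_sub_cos_sub,
    one_add_cos_add_mul_one_add_cos_sub, cos_two_pi_div_three, mul_div_cancel₀ t two_ne_zero,
    cos_two_mul]
  have symmetric_gap : 1 + cos t < (-(1 / 2) - cos t) ^ 2 ↔ 1 / 2 < 2 * cos t ^ 2 - 1 := by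
    constructor <;> intro h <;> linarith
  have antisymmetric_gap : 1 - cos t < (-(1 / 2) + cos t) ^ 2 ↔ 1 / 2 < 2 * cos t ^ 2 - 1 := by
    constructor <;> intro h <;> linarith
  rw [symmetric_gap, antisymmetric_gap, and_self_iff]

theorem gram_matrix_family_11_posDef (t : ℝ) (ht0 : 0 < t) (ht : t < π / 6) :
    let p : ℝ := π / 4 + t / 2
    let q : ℝ := π / 4 - t / 2
    let r : ℝ := 2 * π / 3 + t
    let s : ℝ := 2 * π / 3 - t
    Matrix.PosDef
      !![1, -Real.cos r, -Real.cos p, -Real.cos q;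
         -Real.cos r, 1, -Real.cos q, -Real.cos p;
         -Real.cos p, -Real.cos q, 1, -Real.cos s;
         -Real.cos q, -Real.cos p, -Real.cos s, (1 : ℝ)] := by
  refine (gram_matrix_family_11_posDef_general t).2 ?_
  rw [← cos_pi_div_three]
  exact cos_lt_cos_of_nonneg_of_le_pi (by linarith) (by linarith [pi_pos]) (by linarith)
end

section
/- cos(25π/42)·cos(11π/42) + cos(3π/7)·cos(π/7) = 0. -/
/-!
By product-to-sum, twice the left-hand side is
`1 / 2 + cos (2π/7) + cos (4π/7) + cos (6π/7)`. The last three terms are the real parts of the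
seventh roots of unity in the upper half-plane; as all seven roots sum to zero, these real parts
sum to `-1 / 2`.
-/

open Real

theorem sum_cos_two_mul_succ_mul_pi_div_odd {n : ℕ} (hn : n ≠ 0) :
    ∑ k ∈ Finset.range n, cos (2 * (k + 1) * π / (2 * n + 1)) = -1 / 2 := by
  set x : ℝ := π / (2 * n + 1) with hx
  have sin_pos : 0 < sin x := by
    have : (0 : ℝ) < n := by positivity
    exact sin_pos_of_pos_of_lt_pi (by positivity) (div_lt_self pi_pos (by linarith))
  have angle_eq (k : ℕ) : 2 * (k + 1) * π / (2 * n + 1) = 2 * x * k + 2 * x := by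
    rw [hx]; ring
  have two_mul_n_mul_x : 2 * (n * x) = π - x := by
    rw [hx]; field_simp; ring
  simp only [angle_eq]
  apply mul_left_cancel₀ sin_pos.ne'
  calc sin x * ∑ k ∈ Finset.range n, cos (2 * x * k + 2 * x)
      = sin (n * x) * cos (π - n * x) := by
        have := sin_mul_sum_cos n (2 * x) (2 * x)
        rwa [mul_div_cancel_left₀ x two_ne_zero, show n * (2 * x) / 2 = n * x by ring,
          show (n - 1) * (2 * x) / 2 + 2 * x = π - n * x by linarith] at this
    _ = -sin (2 * (n * x)) / 2 := by rw [cos_pi_sub, sin_two_mul]; ring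
    _ = sin x * (-1 / 2) := by rw [two_mul_n_mul_x, sin_pi_sub]; ring

theorem cos_two_pi_div_seven_add_cos_four_pi_div_seven_add_cos_six_pi_div_seven :
    cos (2 * π / 7) + cos (4 * π / 7) + cos (6 * π / 7) = -1 / 2 := by
  have := sum_cos_two_mul_succ_mul_pi_div_odd three_ne_zero
  norm_num [Finset.sum_range_succ] at this
  linarith

theorem sporadic_quadruple_2 :
    Real.cos (25 * π / 42) * Real.cos (11 * π / 42)
      + Real.cos (3 * π / 7) * Real.cos (π / 7) = 0 := by
  have first_product : 2 * cos (25 * π / 42) * cos (11 * π / 42) = 1 / 2 + cos (6 * π / 7) := by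
    rw [two_mul_cos_mul_cos, show 25 * π / 42 - 11 * π / 42 = π / 3 by ring,
      show 25 * π / 42 + 11 * π / 42 = 6 * π / 7 by ring, cos_pi_div_three]
  have second_product : 2 * cos (3 * π / 7) * cos (π / 7) = cos (2 * π / 7) + cos (4 * π / 7) := by
    rw [two_mul_cos_mul_cos, show 3 * π / 7 - π / 7 = 2 * π / 7 by ring,
      show 3 * π / 7 + π / 7 = 4 * π / 7 by ring]
  linarith [cos_two_pi_div_seven_add_cos_four_pi_div_seven_add_cos_six_pi_div_seven]
end

section
/- Let α = 5π/18, β = 2π/9, γ = 11π/18. Then each of the three quantities (cos γ + cos α · cos β)/(sin α · sin β), (cos β + cos α · cos γ)/(sin α · sin γ), and (cos α + cos β · cos γ)/(sin β · sin γ) lies strictly between 0 and cos(π/6) = √3/2. -/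
open Real

/-!
With `θ = π / 9` the three angles are `α = π / 2 - 2 * θ`, `β = 2 * θ` and `γ = π / 2 + θ`, so the
cosines of the sides are rational expressions in `cos θ` and `cos (2 * θ)`. Both of these cosines
and their inverses are polynomials in `s = sin (π / 18)`, a root of `8 * s ^ 3 - 6 * s + 1`. The
cosines of the sides opposite `γ`, `β`, `α` become `1 - 4 * s`, `1 - 8 * s ^ 2` and
`8 * s ^ 2 + 8 * s - 1`, and `1 / 6 < s < 3 / 16` places them in the required interval.
-/

/-- The cosine of the side opposite the angle `γ` in a spherical triangle with angles `α`, `β`, `γ`,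
as given by the spherical law of cosines. The opposite angle is the last argument. -/
noncomputable def cosSide (α β γ : ℝ) : ℝ :=
  (cos γ + cos α * cos β) / (sin α * sin β)

section Family

variable {θ : ℝ}

theorem cosSide_opposite_pi_div_two_add (hsin : sin θ ≠ 0) (hcos : cos θ ≠ 0)
    (hcos₂ : cos (2 * θ) ≠ 0) :
    cosSide (π / 2 - 2 * θ) (2 * θ) (π / 2 + θ) = 1 - 1 / cos θ * (1 / cos (2 * θ)) / 2 := by
  rw [cosSide, add_comm (π / 2), cos_add_pi_div_two, cos_pi_div_two_sub, sin_pi_div_two_sub,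
    sin_two_mul]
  field_simp
  ring

theorem cosSide_opposite_two_mul (hcos : cos θ ≠ 0) (hcos₂ : cos (2 * θ) ≠ 0) :
    cosSide (π / 2 - 2 * θ) (π / 2 + θ) (2 * θ) = 1 + 1 / cos θ - 1 / cos (2 * θ) := by
  rw [cosSide, add_comm (π / 2), cos_add_pi_div_two, sin_add_pi_div_two, cos_pi_div_two_sub,
    sin_pi_div_two_sub, sin_two_mul]
  field_simp
  linear_combination -cos θ * cos_two_mul θ - 2 * cos θ * sin_sq_add_cos_sq θ

theorem cosSide_opposite_pi_div_two_sub_two_mul (hsin : sin θ ≠ 0) (hcos : cos θ ≠ 0) :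
    cosSide (2 * θ) (π / 2 + θ) (π / 2 - 2 * θ) = 1 / cos θ + (1 / cos θ) ^ 2 / 2 - 1 := by
  rw [cosSide, add_comm (π / 2), cos_add_pi_div_two, sin_add_pi_div_two, cos_pi_div_two_sub,
    sin_two_mul, cos_two_mul]
  field_simp
  ring

end Family

theorem sin_pi_div_eighteen_cubic : 8 * sin (π / 18) ^ 3 - 6 * sin (π / 18) + 1 = 0 := by
  have triple : sin (3 * (π / 18)) = 1 / 2 := by
    rw [← sin_pi_div_six]
    ring_nf
  linear_combination 2 * sin_three_mul (π / 18) - 2 * triple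

theorem one_div_six_lt_sin_pi_div_eighteen : 1 / 6 < sin (π / 18) := by
  have sin_pos : 0 < sin (π / 18) := sin_pos_of_pos_of_lt_pi (by positivity) (by linarith [pi_pos])
  linarith [sin_pi_div_eighteen_cubic, pow_pos sin_pos 3]

theorem sin_pi_div_eighteen_lt_three_div_sixteen : sin (π / 18) < 3 / 16 :=
  calc
    sin (π / 18) < π / 18 := sin_lt (by positivity)
    _ < 3 / 16 := by linarith [pi_lt_d2]

theorem cos_pi_div_nine_eq : cos (π / 9) = 1 - 2 * sin (π / 18) ^ 2 := by
  rw [show π / 9 = 2 * (π / 18) by ring, cos_two_mul]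
  linear_combination 2 * sin_sq_add_cos_sq (π / 18)

theorem cos_two_mul_pi_div_nine_eq :
    cos (2 * (π / 9)) = 1 - sin (π / 18) - 2 * sin (π / 18) ^ 2 := by
  rw [cos_two_mul, cos_pi_div_nine_eq]
  linear_combination sin (π / 18) * sin_pi_div_eighteen_cubic

theorem sin_pi_div_nine_ne_zero : sin (π / 9) ≠ 0 :=
  (sin_pos_of_pos_of_lt_pi (by positivity) (by linarith [pi_pos])).ne'

theorem cos_pi_div_nine_ne_zero : cos (π / 9) ≠ 0 :=
  (cos_pos_of_mem_Ioo ⟨by linarith [pi_pos], by linarith [pi_pos]⟩).ne'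

theorem cos_two_mul_pi_div_nine_ne_zero : cos (2 * (π / 9)) ≠ 0 :=
  (cos_pos_of_mem_Ioo ⟨by linarith [pi_pos], by linarith [pi_pos]⟩).ne'

theorem one_div_cos_pi_div_nine :
    1 / cos (π / 9) = 2 - 4 * sin (π / 18) - 8 * sin (π / 18) ^ 2 := by
  rw [div_eq_iff cos_pi_div_nine_ne_zero, cos_pi_div_nine_eq]
  linear_combination (-(2 * sin (π / 18) + 1)) * sin_pi_div_eighteen_cubic

theorem one_div_cos_two_mul_pi_div_nine :
    1 / cos (2 * (π / 9)) = 2 - 4 * sin (π / 18) := by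
  rw [div_eq_iff cos_two_mul_pi_div_nine_ne_zero, cos_two_mul_pi_div_nine_eq]
  linear_combination -sin_pi_div_eighteen_cubic

theorem cosSide_opposite_pi_div_two_add_pi_div_nine :
    cosSide (π / 2 - 2 * (π / 9)) (2 * (π / 9)) (π / 2 + π / 9) = 1 - 4 * sin (π / 18) := by
  rw [cosSide_opposite_pi_div_two_add sin_pi_div_nine_ne_zero cos_pi_div_nine_ne_zero
    cos_two_mul_pi_div_nine_ne_zero, one_div_cos_pi_div_nine, one_div_cos_two_mul_pi_div_nine]
  linear_combination (-2) * sin_pi_div_eighteen_cubic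

theorem cosSide_opposite_two_mul_pi_div_nine :
    cosSide (π / 2 - 2 * (π / 9)) (π / 2 + π / 9) (2 * (π / 9)) = 1 - 8 * sin (π / 18) ^ 2 := by
  rw [cosSide_opposite_two_mul cos_pi_div_nine_ne_zero cos_two_mul_pi_div_nine_ne_zero,
    one_div_cos_pi_div_nine, one_div_cos_two_mul_pi_div_nine]
  ring

theorem cosSide_opposite_pi_div_two_sub_two_mul_pi_div_nine :
    cosSide (2 * (π / 9)) (π / 2 + π / 9) (π / 2 - 2 * (π / 9)) =
      8 * sin (π / 18) ^ 2 + 8 * sin (π / 18) - 1 := by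
  rw [cosSide_opposite_pi_div_two_sub_two_mul sin_pi_div_nine_ne_zero cos_pi_div_nine_ne_zero,
    one_div_cos_pi_div_nine]
  linear_combination (4 * sin (π / 18) + 4) * sin_pi_div_eighteen_cubic

theorem vertex_link_side_lengths :
    let α : ℝ := 5 * π / 18
    let β : ℝ := 2 * π / 9
    let γ : ℝ := 11 * π / 18
    (0 < (Real.cos γ + Real.cos α * Real.cos β) / (Real.sin α * Real.sin β) ∧
      (Real.cos γ + Real.cos α * Real.cos β) / (Real.sin α * Real.sin β) < Real.cos (π / 6)) ∧
    (0 < (Real.cos β + Real.cos α * Real.cos γ) / (Real.sin α * Real.sin γ) ∧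
      (Real.cos β + Real.cos α * Real.cos γ) / (Real.sin α * Real.sin γ) < Real.cos (π / 6)) ∧
    (0 < (Real.cos α + Real.cos β * Real.cos γ) / (Real.sin β * Real.sin γ) ∧
      (Real.cos α + Real.cos β * Real.cos γ) / (Real.sin β * Real.sin γ) < Real.cos (π / 6)) ∧
    Real.cos (π / 6) = Real.sqrt 3 / 2 := by
  intro α β γ
  have hα : α = π / 2 - 2 * (π / 9) := by ring
  have hβ : β = 2 * (π / 9) := by ring
  have hγ : γ = π / 2 + π / 9 := by ring
  change (0 < cosSide α β γ ∧ cosSide α β γ < cos (π / 6)) ∧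
    (0 < cosSide α γ β ∧ cosSide α γ β < cos (π / 6)) ∧
    (0 < cosSide β γ α ∧ cosSide β γ α < cos (π / 6)) ∧ cos (π / 6) = √3 / 2
  rw [hα, hβ, hγ, cosSide_opposite_pi_div_two_add_pi_div_nine,
    cosSide_opposite_two_mul_pi_div_nine, cosSide_opposite_pi_div_two_sub_two_mul_pi_div_nine,
    cos_pi_div_six]
  have sqrt_three_gt : 8 / 5 < √3 := lt_sqrt_of_sq_lt (by norm_num)
  have lower := one_div_six_lt_sin_pi_div_eighteen
  have upper := sin_pi_div_eighteen_lt_three_div_sixteen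
  have sq_lower : (1 / 6) ^ 2 < sin (π / 18) ^ 2 := by gcongr
  have sq_upper : sin (π / 18) ^ 2 < (3 / 16) ^ 2 := by gcongr
  refine ⟨⟨?_, ?_⟩, ⟨?_, ?_⟩, ⟨?_, ?_⟩, rfl⟩ <;> linarith
end

section
/- cos²(2π/3) + cos²(3π/5) + cos²(4π/5) = 1. -/
open Real

/-!
For `x = π / (2m + 1)` with `m ≥ 1`, the multiples `(m + 1) x, …, 2m x` are those strictly inside
the second quadrant, and summing `cos² θ = (1 + cos 2θ) / 2` over this arithmetic progression
gives `(2m - 1) / 4`. The angle `2π/3` is the case `m = 1` and the pair `3π/5, 4π/5` is the case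
`m = 2`, so the three squares add up to `1/4 + 3/4`.
-/

theorem sin_mul_sum_cos_sq (n : ℕ) (a b : ℝ) :
    sin a * ∑ i ∈ Finset.range n, cos (a * i + b) ^ 2 =
      (n * sin a + sin (n * a) * cos ((n - 1) * a + 2 * b)) / 2 := by
  have double_angle_sum :
      sin a * ∑ i ∈ Finset.range n, cos (2 * (a * i + b)) =
        sin (n * a) * cos ((n - 1) * a + 2 * b) := by
    convert sin_mul_sum_cos n (2 * a) (2 * b) using 5 <;> ring
  simp_rw [cos_sq, Finset.sum_add_distrib, ← Finset.sum_div, Finset.sum_const, Finset.card_range,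
    nsmul_eq_mul]
  linear_combination double_angle_sum / 2

theorem sin_pi_div_two_mul_add_one_pos {m : ℕ} (hm : m ≠ 0) : 0 < sin (π / (2 * m + 1)) := by
  have m_pos : (0 : ℝ) < m := mod_cast Nat.pos_of_ne_zero hm
  exact sin_pos_of_pos_of_lt_pi (by positivity) (div_lt_self pi_pos (by linarith))

theorem sum_Ico_cos_sq_mul_pi_div_two_mul_add_one {m : ℕ} (hm : m ≠ 0) :
    ∑ k ∈ Finset.Ico (m + 1) (2 * m + 1), cos (k * π / (2 * m + 1)) ^ 2 = (2 * m - 1) / 4 := by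
  set x : ℝ := π / (2 * m + 1) with hx
  have odd_mul_x : (2 * m + 1) * x = π := by rw [hx]; field_simp
  have sum_eq_range :
      ∑ k ∈ Finset.Ico (m + 1) (2 * m + 1), cos (k * π / (2 * m + 1)) ^ 2 =
        ∑ i ∈ Finset.range m, cos (x * i + (m + 1) * x) ^ 2 := by
    rw [Finset.sum_Ico_eq_sum_range, show 2 * m + 1 - (m + 1) = m by lia]
    refine Finset.sum_congr rfl fun i _ ↦ ?_
    rw [mul_div_assoc, ← hx]
    push_cast
    ring_nf
  have boundary_term :
      sin (m * x) * cos ((m - 1) * x + 2 * ((m + 1) * x)) = -sin x / 2 := by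
    calc
      _ = sin (m * x) * cos (m * x + π) := by rw [← odd_mul_x]; ring_nf
      _ = -sin (2 * (m * x)) / 2 := by rw [cos_add_pi, sin_two_mul]; ring
      _ = -sin (π - x) / 2 := by rw [← odd_mul_x]; ring_nf
      _ = -sin x / 2 := by rw [sin_pi_sub]
  rw [sum_eq_range]
  apply mul_left_cancel₀ (sin_pi_div_two_mul_add_one_pos hm).ne'
  rw [← hx, sin_mul_sum_cos_sq, boundary_term]
  ring

theorem lambert_cube_relation :
    Real.cos (2 * π / 3) ^ 2 + Real.cos (3 * π / 5) ^ 2 + Real.cos (4 * π / 5) ^ 2 = 1 := by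
  have third : cos (2 * π / 3) ^ 2 = 1 / 4 := by
    have h := sum_Ico_cos_sq_mul_pi_div_two_mul_add_one one_ne_zero
    norm_num at h
    exact h
  have fifths : cos (3 * π / 5) ^ 2 + cos (4 * π / 5) ^ 2 = 3 / 4 := by
    have h := sum_Ico_cos_sq_mul_pi_div_two_mul_add_one two_ne_zero
    norm_num [Finset.sum_Ico_succ_top] at h
    exact h
  rw [add_assoc, third, fifths]
  norm_num
end

section
/- Let a, b, c be rational multiples of π with π/2 < a, b, c < π and cos²a + cos²b + cos²c = 1. Then, up to a permutation of (a, b, c), either (a, b, c) = (3π/4, 2π/3, 2π/3) or (a, b, c) = (2π/3, 3π/5, 4π/5). -/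
open Real

/-! Since `2 cos² x = 1 + cos 2x`, the relation reads `cos 2a + cos 2b + cos 2c = -1`. If
`2a = 2πp` with `p` of denominator `n`, then `2 cos 2a` is the sum of a primitive `n`-th root of
unity and its inverse, so its average over Galois conjugates is `2 μ(n) / φ(n)`. Averaging the
relation gives `μ(l) / φ(l) + μ(m) / φ(m) + μ(n) / φ(n) = -1` for three denominators that are at
least `3`. For those, `μ(n) / φ(n)` is below `-1/4` only at `n = 3` and equal to `-1/4` only at
`n = 5`. Some summand is at most `-1/3`, so one angle is `2π/3`. The other two summands then add up
to `-1/2`, so one of them has denominator `3` or `5`, and the third angle is determined because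
`cos²` is injective on `[π/2, π]`. -/

section PrimitiveRootTrace

open Polynomial ArithmeticFunction
open scoped Moebius

theorem nextCoeff_X_pow_sub_one {R : Type*} [Ring R] [Nontrivial R] {n : ℕ} (hn : 0 < n) :
    (X ^ n - 1 : R[X]).nextCoeff = -if n = 1 then 1 else 0 := by
  have hdeg : (X ^ n - 1 : R[X]).natDegree = n := by
    simpa using natDegree_X_pow_sub_C (R := R) (n := n) (r := 1)
  rw [nextCoeff_of_natDegree_pos (by omega), hdeg, coeff_sub, coeff_X_pow, coeff_one,
    if_neg (by omega), zero_sub]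
  simp only [show n - 1 = 0 ↔ n = 1 by omega]

theorem nextCoeff_cyclotomic (n : ℕ) (R : Type*) [CommRing R] :
    (cyclotomic n R).nextCoeff = -(μ n : R) := by
  nontriviality R
  rcases n.eq_zero_or_pos with rfl | hn
  · simp [nextCoeff]
  have sum_divisors : ∀ m > 0, ∑ d ∈ m.divisors, (cyclotomic d R).nextCoeff =
      -if m = 1 then 1 else 0 := fun m hm ↦ by
    rw [← Monic.nextCoeff_prod _ _ fun d _ ↦ cyclotomic.monic d R,
      prod_cyclotomic_eq_X_pow_sub_one hm, nextCoeff_X_pow_sub_one hm]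
  rw [← sum_eq_iff_sum_mul_moebius_eq.1 sum_divisors n hn,
    Nat.sum_divisorsAntidiagonal fun d e ↦ (μ d : R) * -if e = 1 then 1 else 0,
    Finset.sum_eq_single n]
  · simp [Nat.div_self hn]
  · intro d hd hdn
    have : n / d ≠ 1 := fun h ↦ hdn (Nat.eq_of_dvd_of_div_eq_one (Nat.dvd_of_mem_divisors hd) h)
    simp [this]
  · simp [hn.ne']

/-- The average of the Galois conjugates over `ℚ` of a primitive `n`-th root of unity, given by
its closed form in terms of the Möbius function and Euler's totient. It turns relations between
cosines of rational angles into relations between denominators. -/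
noncomputable def primitiveRootTrace (n : ℕ) : ℚ := μ n / n.totient

theorem exists_linearMap_eq_neg_nextCoeff_minpoly (F L : Type*) [Field F] [CharZero F] [Field L]
    [Algebra F L] :
    ∃ τ : L →ₗ[F] F, ∀ x : L, IsIntegral F x →
      τ x = -(minpoly F x).nextCoeff / (minpoly F x).natDegree := by
  let K := algebraicClosure F L
  have : Algebra.IsIntegral F K := (algebraicClosure.isAlgebraic F L).isIntegral
  -- The normalized trace is only defined on algebraic elements; any linear extension of it to `L`
  -- will do.
  obtain ⟨τ, hτ⟩ := (Algebra.normalizedTrace F K).exists_extend (p := K.toSubalgebra.toSubmodule)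
  refine ⟨τ, fun x hx ↦ ?_⟩
  let y : K := ⟨x, mem_algebraicClosure_iff.2 hx.isAlgebraic⟩
  calc τ x = Algebra.normalizedTrace F K y := LinearMap.congr_fun hτ y
    _ = -(minpoly F x).nextCoeff / (minpoly F x).natDegree := by
      rw [Algebra.normalizedTrace_minpoly, ← minpoly.algHom_eq K.val Subtype.val_injective y,
        smul_eq_mul, div_eq_inv_mul]
      rfl

theorem exists_linearMap_isPrimitiveRoot (L : Type*) [Field L] [Algebra ℚ L] :
    ∃ τ : L →ₗ[ℚ] ℚ, ∀ {ζ : L} {n : ℕ}, 0 < n → IsPrimitiveRoot ζ n →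
      τ ζ = primitiveRootTrace n := by
  obtain ⟨τ, hτ⟩ := exists_linearMap_eq_neg_nextCoeff_minpoly ℚ L
  refine ⟨τ, fun {ζ n} hn hζ ↦ ?_⟩
  have : NeZero (n : ℚ) := ⟨by exact_mod_cast hn.ne'⟩
  rw [hτ ζ (hζ.isIntegral hn).tower_top,
    ← hζ.minpoly_eq_cyclotomic_of_irreducible (cyclotomic.irreducible_rat hn),
    nextCoeff_cyclotomic, natDegree_cyclotomic, neg_neg, primitiveRootTrace]

theorem exists_linearMap_cos_sq :
    ∃ τ : ℝ →ₗ[ℚ] ℚ, (∀ x : ℚ, τ x = x) ∧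
      ∀ q : ℚ, τ (cos (q * π) ^ 2) = (1 + primitiveRootTrace q.den) / 2 := by
  obtain ⟨τ, τ_root⟩ := exists_linearMap_isPrimitiveRoot ℂ
  have τ_one : τ 1 = 1 := by simpa [primitiveRootTrace] using τ_root one_pos IsPrimitiveRoot.one
  have τ_rat (x : ℚ) : τ (x : ℂ) = x := by
    rw [← mul_one (x : ℂ), ← Rat.smul_def, map_smul, τ_one, smul_eq_mul, mul_one]
  refine ⟨τ ∘ₗ (Complex.ofRealHom.toRatAlgHom : ℝ →ₐ[ℚ] ℂ).toLinearMap, fun x ↦ ?_, fun q ↦ ?_⟩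
  · simpa using τ_rat x
  · have hζ := Complex.isPrimitiveRoot_exp_rat q
    set ζ := Complex.exp (2 * π * Complex.I * q) with hζ_def
    have cos_sq_eq : ((cos (q * π) ^ 2 : ℝ) : ℂ) = (1 / 2 : ℚ) • 1 + (1 / 4 : ℚ) • (ζ + ζ⁻¹) := by
      have two_cos : ζ + ζ⁻¹ = 2 * Complex.cos (2 * (q * π)) := by
        rw [Complex.two_cos, hζ_def, ← Complex.exp_neg]
        ring_nf
      rw [two_cos, Complex.cos_two_mul, Rat.smul_def, Rat.smul_def]
      push_cast
      ring
    calc τ ((cos (q * π) ^ 2 : ℝ) : ℂ)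
        = 1 / 2 + 1 / 4 * (primitiveRootTrace q.den + primitiveRootTrace q.den) := by
          rw [cos_sq_eq, map_add, map_smul, map_smul, map_add, τ_one, τ_root q.pos hζ,
            τ_root q.pos hζ.inv, smul_eq_mul, smul_eq_mul, mul_one]
      _ = (1 + primitiveRootTrace q.den) / 2 := by ring

theorem primitiveRootTrace_five : primitiveRootTrace 5 = -1 / 4 := by
  rw [primitiveRootTrace, moebius_apply_prime Nat.prime_five, Nat.totient_prime Nat.prime_five]
  norm_num

theorem moebius_mul_of_prime_of_ne {p q : ℕ} (hp : p.Prime) (hq : q.Prime) (hpq : p ≠ q) :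
    μ (p * q) = 1 := by
  rw [isMultiplicative_moebius.map_mul_of_coprime ((Nat.coprime_primes hp hq).2 hpq),
    moebius_apply_prime hp, moebius_apply_prime hq]
  norm_num

theorem dvd_thirty_of_squarefree_of_totient_le_four {n : ℕ} (hn : Squarefree n)
    (hφ : n.totient ≤ 4) : n ∣ 30 := by
  have primeFactors_subset : n.primeFactors ⊆ {2, 3, 5} := fun p hp ↦ by
    have hprime := Nat.prime_of_mem_primeFactors hp
    have hle : p - 1 ≤ n.totient := Nat.totient_prime hprime ▸
      Nat.le_of_dvd (Nat.totient_pos.2 hn.ne_zero.bot_lt)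
        (Nat.totient_dvd_of_dvd (Nat.dvd_of_mem_primeFactors hp))
    have : p ≤ 5 := by omega
    interval_cases p <;> revert hprime <;> decide
  rw [← Nat.prod_primeFactors_of_squarefree hn]
  exact Finset.prod_dvd_prod_of_subset _ {2, 3, 5} _ primeFactors_subset

theorem eq_three_or_five_of_moebius_eq_neg_one {n : ℕ} (hn : 3 ≤ n) (hμ : μ n = -1)
    (hφ : n.totient ≤ 4) : n = 3 ∨ n = 5 := by
  have hdvd : n ∈ Nat.divisors 30 := Nat.mem_divisors.2
    ⟨dvd_thirty_of_squarefree_of_totient_le_four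
      (moebius_ne_zero_iff_squarefree.1 (by omega)) hφ, by norm_num⟩
  have candidates : ∀ d ∈ Nat.divisors 30, 3 ≤ d → d.totient ≤ 4 →
      d = 3 ∨ d = 5 ∨ d = 2 * 3 ∨ d = 2 * 5 := by decide
  rcases candidates n hdvd hn hφ with h | h | rfl | rfl
  · exact .inl h
  · exact .inr h
  · simp [moebius_mul_of_prime_of_ne Nat.prime_two Nat.prime_three] at hμ
  · simp [moebius_mul_of_prime_of_ne Nat.prime_two Nat.prime_five] at hμ

theorem eq_three_or_five_of_primitiveRootTrace_le {n : ℕ} (hn : 3 ≤ n)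
    (h : primitiveRootTrace n ≤ -1 / 4) : n = 3 ∨ n = 5 := by
  have hφ : (0 : ℚ) < n.totient := by exact_mod_cast Nat.totient_pos.2 (by omega)
  rw [primitiveRootTrace, div_le_iff₀ hφ] at h
  have hμ : μ n = -1 := by
    have hneg : μ n < 0 := by
      have : (μ n : ℚ) < 0 := by linarith
      exact_mod_cast this
    rcases moebius_eq_or n with h | h | h <;> omega
  refine eq_three_or_five_of_moebius_eq_neg_one hn hμ ?_
  have : (n.totient : ℚ) ≤ 4 := by
    rw [hμ] at h
    push_cast at h
    linarith
  exact_mod_cast this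

theorem eq_three_of_primitiveRootTrace_lt {n : ℕ} (hn : 3 ≤ n)
    (h : primitiveRootTrace n < -1 / 4) : n = 3 := by
  refine (eq_three_or_five_of_primitiveRootTrace_le hn h.le).resolve_right ?_
  rintro rfl
  exact h.ne primitiveRootTrace_five

end PrimitiveRootTrace

section ObtuseAngles

variable {p q r : ℚ}

theorem den_lt_two_mul_num (hq : 1 / 2 < q) : (q.den : ℤ) < 2 * q.num := by
  have := (Rat.lt_iff _ _).1 hq
  norm_num at this
  omega

theorem num_lt_den (hq : q < 1) : q.num < q.den := by
  simpa using (Rat.lt_iff _ _).1 hq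

theorem three_le_den (hq : q ∈ Set.Ioo (1 / 2) 1) : 3 ≤ q.den := by
  have := den_lt_two_mul_num hq.1
  have := num_lt_den hq.2
  omega

theorem eq_two_thirds_of_den_eq_three (hq : q ∈ Set.Ioo (1 / 2) 1) (hden : q.den = 3) :
    q = 2 / 3 := by
  have := den_lt_two_mul_num hq.1
  have := num_lt_den hq.2
  have hnum : q.num = 2 := by omega
  rw [← q.num_div_den, hnum, hden]
  norm_num

theorem eq_three_fifths_or_four_fifths_of_den_eq_five (hq : q ∈ Set.Ioo (1 / 2) 1)
    (hden : q.den = 5) : q = 3 / 5 ∨ q = 4 / 5 := by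
  have := den_lt_two_mul_num hq.1
  have := num_lt_den hq.2
  have hnum : q.num = 3 ∨ q.num = 4 := by omega
  rw [← q.num_div_den, hden]
  refine hnum.imp ?_ ?_ <;> intro h <;> norm_num [h]

theorem mul_pi_mem_Ioo_iff : q * π ∈ Set.Ioo (π / 2) π ↔ q ∈ Set.Ioo (1 / 2) 1 := by
  rw [Set.mem_Ioo, Set.mem_Ioo, show π / 2 = ((1 / 2 : ℚ) : ℝ) * π by push_cast; ring,
    mul_lt_mul_iff_left₀ pi_pos, mul_lt_iff_lt_one_left pi_pos]
  norm_cast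

theorem injOn_cos_sq : Set.InjOn (fun x ↦ cos x ^ 2) (Set.Icc (π / 2) π) := by
  intro x hx y hy hxy
  have cos_nonpos {z : ℝ} (hz : z ∈ Set.Icc (π / 2) π) : cos z ≤ 0 :=
    cos_nonpos_of_pi_div_two_le_of_le hz.1 (by linarith [hz.2, pi_pos])
  have hsub : Set.Icc (π / 2) π ⊆ Set.Icc 0 π := Set.Icc_subset_Icc_left (by positivity)
  refine injOn_cos (hsub hx) (hsub hy) (neg_injective ?_)
  rw [← abs_of_nonpos (cos_nonpos hx), ← abs_of_nonpos (cos_nonpos hy)]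
  exact sq_eq_sq_iff_abs_eq_abs _ _ |>.1 hxy

theorem eq_of_cos_sq_eq (hq : q ∈ Set.Ioo (1 / 2) 1) (hr : r ∈ Set.Ioo (1 / 2) 1)
    (h : cos (q * π) ^ 2 = cos (r * π) ^ 2) : q = r := by
  have mem_Icc {x : ℚ} (hx : x ∈ Set.Ioo (1 / 2) 1) : (x * π : ℝ) ∈ Set.Icc (π / 2) π :=
    Set.Ioo_subset_Icc_self (mul_pi_mem_Ioo_iff.2 hx)
  exact_mod_cast mul_right_cancel₀ pi_ne_zero (injOn_cos_sq (mem_Icc hq) (mem_Icc hr) h)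

theorem cos_sq_two_thirds_mul_pi : cos ((2 / 3 : ℚ) * π) ^ 2 = 1 / 4 := by
  rw [show ((2 / 3 : ℚ) : ℝ) * π = π - π / 3 by push_cast; ring, cos_pi_sub, cos_pi_div_three]
  norm_num

theorem cos_sq_three_quarters_mul_pi : cos ((3 / 4 : ℚ) * π) ^ 2 = 1 / 2 := by
  rw [show ((3 / 4 : ℚ) : ℝ) * π = π - π / 4 by push_cast; ring, cos_pi_sub,
    cos_pi_div_four, neg_sq, div_pow, sq_sqrt zero_le_two]
  norm_num

theorem cos_sq_three_fifths_mul_pi_add_cos_sq_four_fifths_mul_pi :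
    cos ((3 / 5 : ℚ) * π) ^ 2 + cos ((4 / 5 : ℚ) * π) ^ 2 = 3 / 4 := by
  have cos_three_fifths : cos ((3 / 5 : ℚ) * π) = 1 - 2 * cos (π / 5) ^ 2 := by
    rw [show ((3 / 5 : ℚ) : ℝ) * π = π - 2 * (π / 5) by push_cast; ring, cos_pi_sub, cos_two_mul]
    ring
  have cos_four_fifths : cos ((4 / 5 : ℚ) * π) = -cos (π / 5) := by
    rw [show ((4 / 5 : ℚ) : ℝ) * π = π - π / 5 by push_cast; ring, cos_pi_sub]
  have quadratic : 4 * cos (π / 5) ^ 2 - 2 * cos (π / 5) - 1 = 0 :=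
    quadratic_root_cos_pi_div_five
  rw [cos_three_fifths, cos_four_fifths]
  linear_combination (cos (π / 5) ^ 2 + cos (π / 5) / 2 - 1 / 4) * quadratic

theorem pair_eq_of_cos_sq_sum_eq_three_quarters (hq : q ∈ Set.Ioo (1 / 2) 1)
    (hr : r ∈ Set.Ioo (1 / 2) 1)
    (h : cos (q * π) ^ 2 + cos (r * π) ^ 2 = 3 / 4) :
    ({q, r} : Multiset ℚ) = {2 / 3, 3 / 4} ∨ ({q, r} : Multiset ℚ) = {3 / 5, 4 / 5} := by
  wlog hle : primitiveRootTrace q.den ≤ primitiveRootTrace r.den generalizing q r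
  · rw [Multiset.pair_comm]
    exact this hr hq (by rwa [add_comm]) (le_of_not_ge hle)
  have sum_trace : primitiveRootTrace q.den + primitiveRootTrace r.den = -1 / 2 := by
    obtain ⟨τ, τ_rat, τ_cos_sq⟩ := exists_linearMap_cos_sq
    have := congrArg τ (h.trans (show (3 / 4 : ℝ) = (3 / 4 : ℚ) by norm_num))
    rw [map_add, τ_cos_sq, τ_cos_sq, τ_rat] at this
    linarith
  have hr_eq {s : ℚ} (hs : s ∈ Set.Ioo (1 / 2) 1)
      (hqs : cos (q * π) ^ 2 + cos (s * π) ^ 2 = 3 / 4) : r = s :=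
    eq_of_cos_sq_eq hr hs (by linarith)
  have sum_fifths := cos_sq_three_fifths_mul_pi_add_cos_sq_four_fifths_mul_pi
  rcases eq_three_or_five_of_primitiveRootTrace_le (three_le_den hq) (by linarith) with h3 | h5
  · obtain rfl := eq_two_thirds_of_den_eq_three hq h3
    left
    rw [hr_eq (s := 3 / 4) (by norm_num)
      (by rw [cos_sq_two_thirds_mul_pi, cos_sq_three_quarters_mul_pi]; norm_num)]
  · right
    rcases eq_three_fifths_or_four_fifths_of_den_eq_five hq h5 with rfl | rfl
    · rw [hr_eq (s := 4 / 5) (by norm_num) sum_fifths]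
    · rw [hr_eq (s := 3 / 5) (by norm_num) ((add_comm _ _).trans sum_fifths), Multiset.pair_comm]

theorem one_den_eq_three_of_cos_sq_sum_eq_one (hp : p ∈ Set.Ioo (1 / 2) 1)
    (hq : q ∈ Set.Ioo (1 / 2) 1) (hr : r ∈ Set.Ioo (1 / 2) 1)
    (h : cos (p * π) ^ 2 + cos (q * π) ^ 2 + cos (r * π) ^ 2 = 1) :
    p.den = 3 ∨ q.den = 3 ∨ r.den = 3 := by
  obtain ⟨τ, τ_rat, τ_cos_sq⟩ := exists_linearMap_cos_sq
  have sum_trace := congrArg τ (h.trans Rat.cast_one.symm)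
  rw [map_add, map_add, τ_cos_sq, τ_cos_sq, τ_cos_sq, τ_rat] at sum_trace
  have trace_ge {x : ℚ} (hx : x ∈ Set.Ioo (1 / 2) 1) (hden : x.den ≠ 3) :
      -1 / 4 ≤ primitiveRootTrace x.den :=
    not_lt.1 fun hlt ↦ hden (eq_three_of_primitiveRootTrace_lt (three_le_den hx) hlt)
  by_contra! hden
  linarith [trace_ge hp hden.1, trace_ge hq hden.2.1, trace_ge hr hden.2.2]

theorem triple_eq_of_den_eq_three (hp : p ∈ Set.Ioo (1 / 2) 1)
    (hq : q ∈ Set.Ioo (1 / 2) 1) (hr : r ∈ Set.Ioo (1 / 2) 1)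
    (h : cos (p * π) ^ 2 + cos (q * π) ^ 2 + cos (r * π) ^ 2 = 1) (hden : p.den = 3) :
    ({p, q, r} : Multiset ℚ) = {3 / 4, 2 / 3, 2 / 3} ∨
      ({p, q, r} : Multiset ℚ) = {2 / 3, 3 / 5, 4 / 5} := by
  obtain rfl := eq_two_thirds_of_den_eq_three hp hden
  rw [cos_sq_two_thirds_mul_pi] at h
  rcases pair_eq_of_cos_sq_sum_eq_three_quarters hq hr (by linarith) with hpair | hpair
  · left
    rw [Multiset.insert_eq_cons, hpair, Multiset.pair_comm (2 / 3) (3 / 4)]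
    exact Multiset.cons_swap _ _ _
  · right
    rw [Multiset.insert_eq_cons, hpair]
    rfl

theorem triple_eq_of_cos_sq_sum_eq_one (hp : p ∈ Set.Ioo (1 / 2) 1)
    (hq : q ∈ Set.Ioo (1 / 2) 1) (hr : r ∈ Set.Ioo (1 / 2) 1)
    (h : cos (p * π) ^ 2 + cos (q * π) ^ 2 + cos (r * π) ^ 2 = 1) :
    ({p, q, r} : Multiset ℚ) = {3 / 4, 2 / 3, 2 / 3} ∨
      ({p, q, r} : Multiset ℚ) = {2 / 3, 3 / 5, 4 / 5} := by
  rcases one_den_eq_three_of_cos_sq_sum_eq_one hp hq hr h with hden | hden | hden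
  · exact triple_eq_of_den_eq_three hp hq hr h hden
  · rw [show ({p, q, r} : Multiset ℚ) = {q, p, r} from Multiset.cons_swap _ _ _]
    exact triple_eq_of_den_eq_three hq hp hr (by linarith) hden
  · rw [Multiset.insert_eq_cons, Multiset.pair_comm q r,
      show p ::ₘ ({r, q} : Multiset ℚ) = {r, p, q} from Multiset.cons_swap _ _ _]
    exact triple_eq_of_den_eq_three hr hp hq (by linarith) hden

end ObtuseAngles

theorem rational_lambert_cubes_classification
    (a b c : ℝ)
    (ha : ∃ q : ℚ, a = q * π) (hb : ∃ q : ℚ, b = q * π) (hc : ∃ q : ℚ, c = q * π)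
    (ha1 : π / 2 < a) (ha2 : a < π)
    (hb1 : π / 2 < b) (hb2 : b < π)
    (hc1 : π / 2 < c) (hc2 : c < π)
    (heq : Real.cos a ^ 2 + Real.cos b ^ 2 + Real.cos c ^ 2 = 1) :
    ({a, b, c} : Multiset ℝ) = {3 * π / 4, 2 * π / 3, 2 * π / 3} ∨
      ({a, b, c} : Multiset ℝ) = {2 * π / 3, 3 * π / 5, 4 * π / 5} := by
  obtain ⟨p, rfl⟩ := ha
  obtain ⟨q, rfl⟩ := hb
  obtain ⟨r, rfl⟩ := hc
  have rational_triple := triple_eq_of_cos_sq_sum_eq_one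
    (mul_pi_mem_Ioo_iff.1 ⟨ha1, ha2⟩) (mul_pi_mem_Ioo_iff.1 ⟨hb1, hb2⟩)
    (mul_pi_mem_Ioo_iff.1 ⟨hc1, hc2⟩) heq
  refine rational_triple.imp (fun h ↦ ?_) fun h ↦ ?_ <;>
    simpa [div_mul_eq_mul_div] using congrArg (Multiset.map fun x : ℚ ↦ (x : ℝ) * π) h
end
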